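/- For a connected graph G of diameter 2, cfc(G) = max{2, h(G)}. -/

import Mathlib

open SimpleGraph

/-- An edge coloring makes `G` conflict-free connected if every pair of distinct
vertices is joined by a path on which some color appears on exactly one edge. -/
def IsCFConnColoring {V : Type*} (G : SimpleGraph V) (c : Sym2 V → ℕ) : Prop :=
  ∀ u v : V, u ≠ v → ∃ p : G.Walk u v, p.IsPath ∧
    ∃ col : ℕ, (p.edges.filter (fun e => c e = col)).length = 1

/-- The conflict-free connection number of `G`. -/
noncomputable def cfConn {V : Type*} (G : SimpleGraph V) : ℕ :=
  sInf {k | ∃ c : Sym2 V → ℕ, (∀ e ∈ G.edgeSet, c e < k) ∧ IsCFConnColoring G c}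

/-- The subgraph `C(G)` of `G` induced by the set of cut-edges (bridges). -/
def bridgeGraph {V : Type*} (G : SimpleGraph V) : SimpleGraph V :=
  SimpleGraph.fromEdgeSet {e | G.IsBridge e}

/-- `h(G)`: the maximum of `cfConn` over the components of the forest of cut-edges
of `G` (it equals `0` if `G` has no cut-edge). -/
noncomputable def hG {V : Type*} (G : SimpleGraph V) : ℕ :=
  sSup {n | ∃ comp : (bridgeGraph G).ConnectedComponent,
    n = cfConn ((bridgeGraph G).induce comp.supp)}

/-!
A path of bridges is the only path of `G` between its ends, so a conflict-free connection coloring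
of `G` restricts to one of each component of the forest of bridges; hence `h(G) ≤ cfc(G)`. One color
is not enough, because `G` is not complete.

For the upper bound, suppose first that `G` has no cut vertex. Then any two vertices are joined by a
path through any prescribed edge, so it suffices to give one edge a color of its own. Otherwise,
since the diameter is `2`, a cut vertex `v` is adjacent to all other vertices. The bridges are then
the edges from `v` to the isolated vertices of `G - v`. They form a star, whose edges need distinct
colors in any conflict-free connection coloring, so there are at most `h(G)` of them, and they can
be colored injectively. For each other component of `G - v`, one edge from `v` to it gets color `1`;
all remaining edges get color `0`. A vertex of such a component can be reached from `v` through the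
component both with no edge and with one edge of color `1`, whichever makes the total number of
these edges `1` on the way to a vertex of another component. Two vertices of the same component are
joined through `v` by a path containing the one edge of color `1` chosen for it.
-/

section

variable {V W : Type*} {G : SimpleGraph V} {c : Sym2 V → ℕ} {u v w x y z : V} {e : Sym2 V}
  {k : ℕ}

/-- `u` and `v` are joined by a conflict-free path: one on which some color appears on exactly
one edge. This is the condition imposed on each pair of vertices by `IsCFConnColoring`. -/
def IsCFJoined (G : SimpleGraph V) (c : Sym2 V → ℕ) (u v : V) : Prop :=
  ∃ p : G.Walk u v, p.IsPath ∧ ∃ col : ℕ, (p.edges.filter (fun e => c e = col)).length = 1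

/-- The colors `0, …, k - 1` suffice for a conflict-free connection coloring of `G`. -/
def IsCFConnColorable (G : SimpleGraph V) (k : ℕ) : Prop :=
  ∃ c : Sym2 V → ℕ, (∀ e ∈ G.edgeSet, c e < k) ∧ IsCFConnColoring G c

section Paths

theorem isPath_append_of_disjoint {p : G.Walk u v} {q : G.Walk v w} (hp : p.IsPath) (hq : q.IsPath)
    (h : ∀ x ∈ p.support, x ∈ q.support → x = v) : (p.append q).IsPath := by
  rw [Walk.isPath_def, Walk.support_append, List.nodup_append']
  have hnodup := hq.support_nodup
  rw [← Walk.cons_tail_support, List.nodup_cons] at hnodup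
  exact ⟨hp.support_nodup, hnodup.2,
    fun x hx hx' ↦ hnodup.1 (h x hx (List.mem_of_mem_tail hx') ▸ hx')⟩

theorem eq_of_forall_isBridge {p q : G.Walk u v} (hp : p.IsPath) (hq : q.IsPath)
    (hb : ∀ e ∈ q.edges, G.IsBridge e) : p = q := by
  by_contra hne
  obtain ⟨a, b, p', q', hp', hq', hcycle⟩ := hp.exists_isCycle_of_ne hq hne
  by_cases hnil : q'.Nil
  · obtain rfl := hnil.eq
    rw [Walk.eq_nil_iff_nil.mpr hnil, Walk.reverse_nil, Walk.append_nil] at hcycle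
    exact hcycle.not_nil (Walk.isPath_iff_isSubwalk_imp_nil.mp hp a p' hp')
  · obtain ⟨e, he⟩ := List.exists_mem_of_ne_nil _ (mt Walk.edges_eq_nil.mp hnil)
    exact (hb e (hq'.edges_subset he)).notMem_edges_of_isCycle hcycle (by simp [he])

theorem exists_isPath_notMem_support (hxy : x ≠ y) (h : G.Reachable x w) :
    (∃ p : G.Walk x w, p.IsPath ∧ y ∉ p.support) ∨ ∃ p : G.Walk y w, p.IsPath ∧ x ∉ p.support := by
  classical
  obtain ⟨p, hp⟩ := h.exists_isPath
  by_cases hy : y ∈ p.support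
  · rw [← p.take_spec hy] at hp
    refine .inr ⟨p.dropUntil y hy, hp.of_append_right, fun hx ↦ ?_⟩
    exact hp.ne_of_mem_support_of_append hxy (Walk.start_mem_support _) hx rfl
  · exact .inl ⟨p, hp, hy⟩

theorem not_isBridge_of_triangle (huv : G.Adj u v) (hvw : G.Adj v w) (huw : G.Adj u w) :
    ¬ G.IsBridge s(u, v) := fun hb ↦ by
  have h := isBridge_iff_forall_walk_mem_edges.mp hb (.cons huw (.cons hvw.symm .nil))
  simp [huv.ne, hvw.ne, huv.ne', huw.ne] at h

end Paths

namespace IsCFJoined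

theorem symm (h : IsCFJoined G c u v) : IsCFJoined G c v u := by
  obtain ⟨p, hp, col, hcol⟩ := h
  exact ⟨p.reverse, hp.reverse, col, by
    rw [Walk.edges_reverse, List.filter_reverse, List.length_reverse, hcol]⟩

theorem of_isPath {p : G.Walk u v} (hp : p.IsPath) (he : e ∈ p.edges)
    (huniq : ∀ e' ∈ p.edges, c e' = c e → e' = e) : IsCFJoined G c u v := by
  classical
  refine ⟨p, hp, c e, ?_⟩
  rw [List.filter_congr (q := (· == e)) fun e' he' ↦ ?_, ← List.countP_eq_length_filter]
  · exact List.count_eq_one_of_mem hp.isTrail.edges_nodup he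
  · rw [Bool.eq_iff_iff, decide_eq_true_iff, beq_iff_eq]
    exact ⟨huniq e' he', congrArg c⟩

theorem of_adj (h : G.Adj u v) : IsCFJoined G c u v :=
  of_isPath (e := s(u, v)) (.of_adj h) (by simp) (by simp)

theorem of_adj_of_adj (hxv : G.Adj x v) (hvy : G.Adj v y) (hxy : x ≠ y)
    (hne : c s(x, v) ≠ c s(v, y)) : IsCFJoined G c x y := by
  have hp : (Walk.cons hxv (.cons hvy .nil)).IsPath := by simp [hxv.ne, hvy.ne, hxy]
  refine of_isPath (e := s(x, v)) hp (by simp) ?_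
  simp [hne.symm]

end IsCFJoined

section Colorable

theorem IsCFConnColorable.mono {l : ℕ} (hkl : k ≤ l) (h : IsCFConnColorable G k) :
    IsCFConnColorable G l :=
  let ⟨c, hlt, hc⟩ := h
  ⟨c, fun e he ↦ (hlt e he).trans_le hkl, hc⟩

theorem IsCFConnColorable.cfConn_le (h : IsCFConnColorable G k) : cfConn G ≤ k :=
  Nat.sInf_le h

theorem IsCFConnColorable.isCFConnColorable_cfConn (h : IsCFConnColorable G k) :
    IsCFConnColorable G (cfConn G) :=
  Nat.sInf_mem (s := {k | IsCFConnColorable G k}) ⟨k, h⟩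

theorem IsCFConnColorable.two_le (h : IsCFConnColorable G k) (hne : G ≠ ⊤) : 2 ≤ k := by
  obtain ⟨c, hlt, hc⟩ := h
  obtain ⟨u, v, huv, hadj⟩ := ne_top_iff_exists_not_adj.mp hne
  obtain ⟨p, -, col, hcol⟩ := hc u v huv
  by_contra! hk
  have hconst : ∀ e ∈ p.edges, c e = 0 := fun e he ↦ by
    have := hlt e (p.edges_subset_edgeSet he)
    lia
  have hcol0 : col = 0 := by
    obtain ⟨e, he⟩ := List.length_pos_iff_exists_mem.mp (hcol ▸ Nat.one_pos)
    obtain ⟨he, hec⟩ := List.mem_filter.mp he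
    exact (of_decide_eq_true hec).symm.trans (hconst e he)
  rw [List.filter_eq_self.mpr (by simpa [hcol0] using hconst), Walk.length_edges] at hcol
  exact hadj (Walk.adj_of_length_eq_one hcol)

theorem exists_injOn_lt_ncard {α : Type*} {s : Set α} (hs : s.Finite) :
    ∃ f : α → ℕ, (∀ a ∈ s, f a < s.ncard) ∧ Set.InjOn f s := by
  have hcard : s.encard ≤ (Set.Iio s.ncard).encard := by
    rw [← (Set.finite_Iio _).cast_ncard_eq, ← hs.cast_ncard_eq, Set.ncard_Iio_nat]
  exact hs.exists_injOn_of_encard_le hcard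

theorem isCFConnColoring_of_injOn (hpre : G.Preconnected) (hc : Set.InjOn c G.edgeSet) :
    IsCFConnColoring G c := by
  intro u v hne
  obtain ⟨p, hp⟩ := hpre.exists_isPath u v
  have hedge := p.edges_subset_edgeSet
  obtain ⟨e, he⟩ := List.exists_mem_of_ne_nil _ (mt Walk.edges_eq_nil.mp (Walk.not_nil_of_ne hne))
  exact IsCFJoined.of_isPath hp he fun e' he' h ↦ hc (hedge he') (hedge he) h

/-- A path of bridges is the only path between its ends, so `G` has to color it conflict-free. -/
theorem IsCFConnColoring.comp_of_isBridge {H : SimpleGraph W} (hc : IsCFConnColoring G c)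
    (hH : H.Preconnected) {f : H →g G} (hf : Function.Injective f)
    (hb : ∀ e ∈ H.edgeSet, G.IsBridge (e.map f)) : IsCFConnColoring H (c ∘ Sym2.map f) := by
  intro u v hne
  obtain ⟨q, hq⟩ := hH.exists_isPath u v
  obtain ⟨p, hp, col, hcol⟩ := hc (f u) (f v) (hf.ne hne)
  have hbq : ∀ e ∈ (q.map f).edges, G.IsBridge e := by
    rw [Walk.edges_map, List.forall_mem_map]
    exact fun e he ↦ hb e (q.edges_subset_edgeSet he)
  obtain rfl := eq_of_forall_isBridge hp (hq.map hf) hbq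
  refine ⟨q, hq, col, ?_⟩
  rwa [Walk.edges_map, List.filter_map, List.length_map] at hcol

theorem IsCFConnColorable.of_isBridge {H : SimpleGraph W} (h : IsCFConnColorable G k)
    (hH : H.Preconnected) {f : H →g G} (hf : Function.Injective f)
    (hb : ∀ e ∈ H.edgeSet, G.IsBridge (e.map f)) : IsCFConnColorable H k :=
  let ⟨c, hlt, hc⟩ := h
  ⟨c ∘ Sym2.map f, fun _ he ↦ hlt _ (f.map_mem_edgeSet he), hc.comp_of_isBridge hH hf hb⟩

end Colorable

section Bridges

theorem edgeSet_bridgeGraph : (bridgeGraph G).edgeSet = {e | G.IsBridge e} := by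
  refine (edgeSet_fromEdgeSet _).trans (sdiff_eq_left.mpr (Set.disjoint_left.mpr fun e he hd ↦ ?_))
  induction e with | h u v =>
  obtain rfl : u = v := hd
  exact he .rfl

theorem bridgeGraph_le (hpre : G.Preconnected) : bridgeGraph G ≤ G := fun u v h ↦
  have hb : G.IsBridge s(u, v) := ((fromEdgeSet_adj _).mp h).1
  hb.reachable_iff_adj.mp (hpre u v)

theorem isAcyclic_bridgeGraph (hpre : G.Preconnected) : (bridgeGraph G).IsAcyclic :=
  isAcyclic_iff_forall_isBridge.mpr fun _ he ↦
    IsBridge.anti (bridgeGraph_le hpre) (edgeSet_bridgeGraph.subset he)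

theorem hG_le (h : IsCFConnColorable G k) (hpre : G.Preconnected) : hG G ≤ k := by
  refine csSup_le' ?_
  rintro _ ⟨comp, rfl⟩
  let f := (Hom.ofLE (bridgeGraph_le hpre)).comp (Embedding.induce comp.supp).toHom
  refine (h.of_isBridge comp.connected_toSimpleGraph.preconnected (f := f)
    Subtype.val_injective fun e he ↦ ?_).cfConn_le
  exact edgeSet_bridgeGraph.subset ((Embedding.induce comp.supp).toHom.map_mem_edgeSet he)

theorem isCFConnColorable_ncard_edgeSet (hpre : G.Preconnected) (hfin : G.edgeSet.Finite) :
    IsCFConnColorable G G.edgeSet.ncard :=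
  let ⟨c, hlt, hinj⟩ := exists_injOn_lt_ncard hfin
  ⟨c, hlt, isCFConnColoring_of_injOn hpre hinj⟩

theorem isCFConnColorable_connectedComponent (hfin : G.edgeSet.Finite)
    (comp : G.ConnectedComponent) :
    IsCFConnColorable (G.induce comp.supp) G.edgeSet.ncard := by
  have hinj := Sym2.map.injective (Subtype.val_injective (p := (· ∈ comp.supp)))
  have hmaps : ∀ e ∈ (G.induce comp.supp).edgeSet, e.map Subtype.val ∈ G.edgeSet := fun e he ↦
    (Embedding.induce comp.supp).toHom.map_mem_edgeSet he
  have hle := Set.ncard_le_ncard_of_injOn _ hmaps hinj.injOn hfin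
  have hcomp := hfin.of_injOn hmaps hinj.injOn
  exact (isCFConnColorable_ncard_edgeSet comp.connected_toSimpleGraph.preconnected hcomp).mono hle

theorem isCFConnColorable_hG (hfin : (bridgeGraph G).edgeSet.Finite)
    (comp : (bridgeGraph G).ConnectedComponent) :
    IsCFConnColorable ((bridgeGraph G).induce comp.supp) (hG G) := by
  have hbdd : BddAbove {n | ∃ comp : (bridgeGraph G).ConnectedComponent,
      n = cfConn ((bridgeGraph G).induce comp.supp)} := by
    refine ⟨(bridgeGraph G).edgeSet.ncard, ?_⟩
    rintro _ ⟨comp, rfl⟩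
    exact (isCFConnColorable_connectedComponent hfin comp).cfConn_le
  exact (isCFConnColorable_connectedComponent hfin comp).isCFConnColorable_cfConn.mono
    (le_csSup hbdd ⟨comp, rfl⟩)

/-- Two edges at `v` with the same color would form a path, the only one between its ends,
without a unique color. -/
theorem IsCFConnColorable.ncard_neighborSet_le (h : IsCFConnColorable G k) (hacyc : G.IsAcyclic)
    (v : V) : (G.neighborSet v).ncard ≤ k := by
  obtain ⟨c, hlt, hc⟩ := h
  have hinj : Set.InjOn (fun x ↦ c s(v, x)) (G.neighborSet v) := by
    intro x (hx : G.Adj v x) y (hy : G.Adj v y) (heq : c s(v, x) = c s(v, y))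
    by_contra hne
    obtain ⟨p, hp, col, hcol⟩ := hc x y hne
    have hq : (Walk.cons hx.symm (.cons hy .nil)).IsPath := by
      simp [hne, hx.ne', hy.ne]
    obtain rfl : p = _ := congrArg Subtype.val ((hacyc.subsingleton_path x y).elim ⟨p, hp⟩ ⟨_, hq⟩)
    by_cases hv : c s(v, y) = col <;> simp [Sym2.eq_swap (a := x), heq, hv] at hcol
  rw [← Set.ncard_Iio_nat k]
  exact Set.ncard_le_ncard_of_injOn _ (fun x hx ↦ hlt s(v, x) hx) hinj (Set.finite_Iio k)

theorem ncard_neighborSet_bridgeGraph_le_hG (hpre : G.Preconnected)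
    (hfin : (bridgeGraph G).edgeSet.Finite) (v : V) :
    ((bridgeGraph G).neighborSet v).ncard ≤ hG G := by
  let comp := (bridgeGraph G).connectedComponentMk v
  have himage : Subtype.val '' ((bridgeGraph G).induce comp.supp).neighborSet ⟨v, rfl⟩ =
      (bridgeGraph G).neighborSet v := by
    ext x
    have hx : (bridgeGraph G).Adj v x → x ∈ comp.supp := fun h ↦
      ConnectedComponent.sound h.symm.reachable
    simpa using hx
  rw [← himage, Set.ncard_image_of_injective _ Subtype.val_injective]
  exact (isCFConnColorable_hG hfin comp).ncard_neighborSet_le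
    ((isAcyclic_bridgeGraph hpre).induce _) _

end Bridges

section Reachable

theorem eq_of_isIsolated_of_reachable (hu : G.IsIsolated u) (h : G.Reachable u v) : u = v := by
  by_contra hne
  exact G.mem_support_iff_not_isIsolated.mp (mem_support_of_reachable hne h) hu

theorem not_isIsolated_of_reachable (h : G.Reachable x y) (hx : ¬ G.IsIsolated x) :
    ¬ G.IsIsolated y := fun hy ↦
  hx (eq_of_isIsolated_of_reachable hy h.symm ▸ hy)

/-- A representative of the connected component of `x`, chosen once for each component. In
`hubColoring` it selects the edge of color `1` to the component. -/
noncomputable def componentRep (G : SimpleGraph V) (x : V) : V :=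
  (G.connectedComponentMk x).out

theorem reachable_componentRep (G : SimpleGraph V) (x : V) : G.Reachable x (componentRep G x) :=
  ConnectedComponent.exact (Quot.out_eq _).symm

theorem componentRep_eq (h : G.Reachable x y) : componentRep G x = componentRep G y :=
  congrArg Quot.out (ConnectedComponent.sound h)

end Reachable

section DeleteVertex

/-- Deleting `v` disconnects two other vertices. Deletion is modelled by `deleteIncidenceSet`,
which keeps the vertex type and leaves `v` behind as an isolated vertex. -/
def IsCutVertex (G : SimpleGraph V) (v : V) : Prop :=
  ∃ x y, x ≠ v ∧ y ≠ v ∧ ¬ (G.deleteIncidenceSet v).Reachable x y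

theorem isIsolated_deleteIncidenceSet (G : SimpleGraph V) (v : V) :
    (G.deleteIncidenceSet v).IsIsolated v := fun _ h ↦
  (deleteIncidenceSet_adj.mp h).2.1 rfl

theorem notMem_support_deleteIncidenceSet (hx : x ≠ v) (p : (G.deleteIncidenceSet v).Walk x y) :
    v ∉ p.support := by
  classical
  exact fun hv ↦ hx (eq_of_isIsolated_of_reachable (isIsolated_deleteIncidenceSet G v)
    (p.takeUntil v hv).reachable.symm).symm

theorem ne_of_not_isIsolated (hx : ¬ (G.deleteIncidenceSet v).IsIsolated x) : x ≠ v :=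
  fun h ↦ hx (h ▸ isIsolated_deleteIncidenceSet G v)

end DeleteVertex

section NoCutVertex

/-- Some path from `x` to `y` runs through the edge `e`. Such a path is conflict-free when `e` has
a color of its own. -/
def JoinedThrough (G : SimpleGraph V) (e : Sym2 V) (x y : V) : Prop :=
  ∃ p : G.Walk x y, p.IsPath ∧ e ∈ p.edges

theorem JoinedThrough.symm (h : JoinedThrough G e x y) : JoinedThrough G e y x :=
  let ⟨p, hp, he⟩ := h
  ⟨p.reverse, hp.reverse, by simpa using he⟩

theorem exists_isPath_of_not_isCutVertex (hz : ¬ IsCutVertex G z) (hx : x ≠ z) (hy : y ≠ z) :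
    ∃ p : G.Walk x y, p.IsPath ∧ z ∉ p.support := by
  have hreach : (G.deleteIncidenceSet z).Reachable x y := by
    by_contra h
    exact hz ⟨x, y, hx, hy, h⟩
  obtain ⟨p, hp⟩ := hreach.exists_isPath
  refine ⟨p.mapLe (G.deleteIncidenceSet_le z), hp.mapLe _, ?_⟩
  rw [Walk.support_mapLe_eq_support]
  exact notMem_support_deleteIncidenceSet hx p

/-- Closing `q` with the edge `yz` gives a cycle; one of its two arcs from `x` to `z` contains
`e`. -/
theorem exists_isPath_mem_edges_of_adj {q : G.Walk z y} (hq : q.IsPath) (he : e ∈ q.edges)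
    (hyz : G.Adj y z) (hx : x ∈ q.support) (hxz : x ≠ z) :
    ∃ p : G.Walk x z, p.IsPath ∧ e ∈ p.edges ∧ p.support ⊆ q.support := by
  classical
  have hpath := hq
  rw [← q.take_spec hx] at he hpath
  rw [Walk.edges_append, List.mem_append] at he
  rcases he with he | he
  · exact ⟨(q.takeUntil x hx).reverse, (hq.takeUntil hx).reverse, by simpa using he,
      by simpa using q.support_takeUntil_subset_support hx⟩
  · have hz : z ∉ (q.dropUntil x hx).support := fun hz ↦
      hpath.ne_of_mem_support_of_append hxz.symm (Walk.start_mem_support _) hz rfl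
    refine ⟨(q.dropUntil x hx).concat hyz, (hq.dropUntil hx).concat hz hyz, by simp [he], ?_⟩
    simpa [Walk.support_concat] using q.support_dropUntil_subset_support hx

/-- If `z` lies on the given path but `e` only comes after it, then enter the cycle closed by `yz`
along a path that avoids `z`. -/
theorem JoinedThrough.of_adj (h : JoinedThrough G e x y) (hyz : G.Adj y z) (hzx : z ≠ x)
    (hz : ¬ IsCutVertex G z) : JoinedThrough G e x z := by
  classical
  obtain ⟨p, hp, he⟩ := h
  by_cases hzp : z ∈ p.support
  · rw [← p.take_spec hzp] at he
    rw [Walk.edges_append, List.mem_append] at he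
    rcases he with he | he
    · exact ⟨_, hp.takeUntil hzp, he⟩
    · obtain ⟨q, hq, hzq⟩ := exists_isPath_of_not_isCutVertex hz hzx.symm hyz.ne
      obtain ⟨t, ht, htq, hfirst⟩ := q.exists_mem_support_forall_mem_support_imp_eq
        (p.dropUntil z hzp).support.toFinset ⟨y, by simp⟩
      simp only [List.mem_toFinset] at ht hfirst
      have htz : t ≠ z := fun h ↦ hzq (h ▸ htq)
      obtain ⟨r, hr, her, hsub⟩ := exists_isPath_mem_edges_of_adj (hp.dropUntil hzp) he hyz ht htz
      refine ⟨(q.takeUntil t htq).append r, isPath_append_of_disjoint (hq.takeUntil htq) hr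
        fun s hs hsr ↦ hfirst s (hsub hsr) hs, by simp [her]⟩
  · exact ⟨_, hp.concat hzp hyz, by simp [he]⟩

theorem JoinedThrough.of_ne (hcut : ∀ v, ¬ IsCutVertex G v) (h : JoinedThrough G e x y)
    (hy : y ≠ x) (hz : z ≠ x) : JoinedThrough G e x z := by
  obtain ⟨p, -, hp⟩ := exists_isPath_of_not_isCutVertex (hcut x) hy hz
  clear hy
  induction p with
  | nil => exact h
  | cons hadj p ih =>
    rw [Walk.support_cons, List.mem_cons, not_or] at hp
    have hne := ne_of_mem_of_not_mem p.start_mem_support hp.2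
    exact ih (h.of_adj hadj hne (hcut _)) hz hp.2

theorem joinedThrough_of_forall_not_isCutVertex (hcut : ∀ v, ¬ IsCutVertex G v) (huv : G.Adj u v)
    (hxy : x ≠ y) : JoinedThrough G s(u, v) x y := by
  have h : JoinedThrough G s(u, v) u v := ⟨_, .of_adj huv, by simp⟩
  obtain rfl | hy := eq_or_ne y u
  · exact (h.of_ne hcut huv.ne' hxy).symm
  · exact ((h.of_ne hcut huv.ne' hy).symm.of_ne hcut hy.symm hxy).symm

theorem isCFConnColorable_two_of_forall_not_isCutVertex (hcut : ∀ v, ¬ IsCutVertex G v)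
    (huv : G.Adj u v) : IsCFConnColorable G 2 := by
  classical
  refine ⟨Pi.single s(u, v) 1, fun e _ ↦ ?_, fun x y hxy ↦ ?_⟩
  · rw [Pi.single_apply]
    split_ifs <;> simp
  · obtain ⟨p, hp, he⟩ := joinedThrough_of_forall_not_isCutVertex hcut huv hxy
    exact IsCFJoined.of_isPath hp he fun e' _ h ↦ by
      by_contra hne
      simp [hne] at h

end NoCutVertex

section UniversalVertex

theorem not_isBridge_of_mem_edgeSet_deleteIncidenceSet (hv : G.IsUniversal v)
    (he : e ∈ (G.deleteIncidenceSet v).edgeSet) : ¬ G.IsBridge e := by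
  induction e with | h x y =>
  obtain ⟨hxy, hx, hy⟩ := deleteIncidenceSet_adj.mp he
  exact not_isBridge_of_triangle hxy (hv hy.symm).symm (hv hx.symm).symm

theorem isBridge_iff_isIsolated (hv : G.IsUniversal v) (hx : x ≠ v) :
    G.IsBridge s(v, x) ↔ (G.deleteIncidenceSet v).IsIsolated x := by
  constructor
  · intro hb y hxy
    obtain ⟨hadj, -, hy⟩ := deleteIncidenceSet_adj.mp hxy
    exact not_isBridge_of_triangle (hv hx.symm) hadj (hv hy.symm) hb
  · intro hiso
    rw [Sym2.eq_swap, isBridge_iff_forall_walk_mem_edges]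
    intro p
    cases p with
    | nil => exact absurd rfl hx
    | @cons _ y _ hxy p =>
      obtain rfl : y = v := by
        by_contra hy
        exact hiso y (deleteIncidenceSet_adj.mpr ⟨hxy, hx, hy⟩)
      simp

theorem mem_of_isBridge (hv : G.IsUniversal v) (he : G.IsBridge e) : v ∈ e := by
  have hpre : G.Preconnected := (Connected.of_isUniversal hv).preconnected
  by_contra hve
  have hmem := edgeSet_mono (bridgeGraph_le hpre) (edgeSet_bridgeGraph.superset he)
  refine not_isBridge_of_mem_edgeSet_deleteIncidenceSet hv ?_ he
  rw [edgeSet_deleteIncidenceSet]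
  exact ⟨hmem, fun h ↦ hve h.2⟩

theorem ncard_edgeSet_bridgeGraph_eq (hv : G.IsUniversal v) :
    (bridgeGraph G).edgeSet.ncard = ((bridgeGraph G).neighborSet v).ncard := by
  classical
  have h : (bridgeGraph G).edgeSet = (bridgeGraph G).incidenceSet v :=
    subset_antisymm (fun e he ↦ ⟨he, mem_of_isBridge hv (edgeSet_bridgeGraph.subset he)⟩)
      (incidenceSet_subset _ v)
  rw [h]
  exact Nat.card_congr ((bridgeGraph G).incidenceSetEquivNeighborSet v)

open Classical in
/-- The coloring used when `v` is universal: bridges keep their color under `c`, and apart from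
them color `1` is given to exactly one edge from `v` to each component of `G - v`. -/
noncomputable def hubColoring (G : SimpleGraph V) (v : V) (c : Sym2 V → ℕ) (e : Sym2 V) : ℕ :=
  if G.IsBridge e then c e
  else if ∃ x, e = s(v, componentRep (G.deleteIncidenceSet v) x) then 1 else 0

theorem hubColoring_of_isBridge (he : G.IsBridge e) : hubColoring G v c e = c e :=
  if_pos he

theorem hubColoring_of_mem_edgeSet (hv : G.IsUniversal v)
    (he : e ∈ (G.deleteIncidenceSet v).edgeSet) : hubColoring G v c e = 0 := by
  rw [hubColoring, if_neg (not_isBridge_of_mem_edgeSet_deleteIncidenceSet hv he), if_neg]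
  rintro ⟨x, rfl⟩
  exact isIsolated_deleteIncidenceSet G v _ he

theorem hubColoring_componentRep (hv : G.IsUniversal v)
    (hx : ¬ (G.deleteIncidenceSet v).IsIsolated x) :
    hubColoring G v c s(v, componentRep (G.deleteIncidenceSet v) x) = 1 := by
  have hrep := not_isIsolated_of_reachable (reachable_componentRep _ x) hx
  rw [hubColoring, if_neg (mt (isBridge_iff_isIsolated hv (ne_of_not_isIsolated hrep)).mp hrep),
    if_pos ⟨x, rfl⟩]

theorem hubColoring_of_ne_componentRep (hv : G.IsUniversal v)
    (hx : ¬ (G.deleteIncidenceSet v).IsIsolated x)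
    (hne : x ≠ componentRep (G.deleteIncidenceSet v) x) : hubColoring G v c s(v, x) = 0 := by
  rw [hubColoring, if_neg (mt (isBridge_iff_isIsolated hv (ne_of_not_isIsolated hx)).mp hx), if_neg]
  rintro ⟨y, hy⟩
  obtain rfl := Sym2.congr_right.mp hy
  exact hne (componentRep_eq (reachable_componentRep _ y))

/-- Some path from `v` to `x` passes, after `v`, only through the component of `x` in `G - v`
and has exactly `n` edges of color `1`. -/
def HasBlockPath (G : SimpleGraph V) (v : V) (c : Sym2 V → ℕ) (x : V) (n : ℕ) : Prop :=
  ∃ p : G.Walk v x, p.IsPath ∧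
    (∀ y ∈ p.support, y ≠ v → (G.deleteIncidenceSet v).Reachable x y) ∧
    (p.edges.filter (fun e => c e = 1)).length = n

theorem HasBlockPath.isCFJoined {m n : ℕ} (hx : HasBlockPath G v c x m)
    (hy : HasBlockPath G v c y n) (hmn : m + n = 1)
    (hxy : ¬ (G.deleteIncidenceSet v).Reachable x y) : IsCFJoined G c x y := by
  obtain ⟨p, hp, hpv, rfl⟩ := hx
  obtain ⟨q, hq, hqv, rfl⟩ := hy
  refine ⟨p.reverse.append q, isPath_append_of_disjoint hp.reverse hq fun z hzp hzq ↦ ?_, 1, ?_⟩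
  · by_contra hz
    exact hxy ((hpv z (by simpa using hzp) hz).trans (hqv z hzq hz).symm)
  · simpa [Walk.edges_append, Walk.edges_reverse, List.filter_append] using hmn

theorem eq_zero_of_mem_edges_mapLe (hc : ∀ e ∈ (G.deleteIncidenceSet v).edgeSet, c e = 0)
    (p : (G.deleteIncidenceSet v).Walk x y) :
    ∀ e ∈ (p.mapLe (G.deleteIncidenceSet_le v)).edges, c e = 0 := by
  rw [Walk.edges_mapLe_eq_edges]
  exact fun e he ↦ hc e (p.edges_subset_edgeSet he)

theorem hasBlockPath_of_reachable (hv : G.IsUniversal v)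
    (hc : ∀ e ∈ (G.deleteIncidenceSet v).edgeSet, c e = 0) (hu : u ≠ v)
    (h : (G.deleteIncidenceSet v).Reachable u x) :
    HasBlockPath G v c x (if c s(v, u) = 1 then 1 else 0) := by
  classical
  obtain ⟨p, hp⟩ := h.exists_isPath
  have hzero := eq_zero_of_mem_edges_mapLe hc p
  refine ⟨.cons (hv hu.symm) (p.mapLe (G.deleteIncidenceSet_le v)), ?_, ?_, ?_⟩
  · rw [Walk.cons_isPath_iff, Walk.support_mapLe_eq_support]
    exact ⟨hp.mapLe _, notMem_support_deleteIncidenceSet hu p⟩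
  · rw [Walk.support_cons, Walk.support_mapLe_eq_support]
    intro y hy hyv
    exact (p.dropUntil y ((List.mem_cons.mp hy).resolve_left hyv)).reachable.symm
  · have hnil : (p.mapLe (G.deleteIncidenceSet_le v)).edges.filter (fun e ↦ c e = 1) = [] :=
      List.filter_eq_nil_iff.mpr fun e he ↦ by simp [hzero e he]
    rw [Walk.edges_cons, List.filter_cons, hnil]
    simp only [decide_eq_true_eq]
    split_ifs <;> rfl

theorem hasBlockPath_hubColoring (hv : G.IsUniversal v)
    (hx : ¬ (G.deleteIncidenceSet v).IsIsolated x) {n : ℕ} (hn : n < 2) :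
    HasBlockPath G v (hubColoring G v c) x n := by
  have hblock : ∀ {u n}, (G.deleteIncidenceSet v).Reachable u x →
      hubColoring G v c s(v, u) = n → n < 2 → HasBlockPath G v (hubColoring G v c) x n := by
    rintro u n hux hcol hn
    have hu := ne_of_not_isIsolated (not_isIsolated_of_reachable hux.symm hx)
    convert hasBlockPath_of_reachable hv (fun _ ↦ hubColoring_of_mem_edgeSet hv) hu hux
    split_ifs <;> lia
  have hrep := reachable_componentRep (G.deleteIncidenceSet v) x
  obtain rfl | rfl : n = 0 ∨ n = 1 := by lia
  · by_cases hne : x = componentRep (G.deleteIncidenceSet v) x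
    · obtain ⟨y, hxy⟩ := exists_adj_iff_not_isIsolated.mpr hx
      have hy := hxy.not_isIsolated_right
      refine hblock hxy.symm.reachable (hubColoring_of_ne_componentRep hv hy ?_) hn
      rw [← componentRep_eq hxy.reachable, ← hne]
      exact hxy.ne'
    · exact hblock .rfl (hubColoring_of_ne_componentRep hv hx hne) hn
  · exact hblock hrep.symm (hubColoring_componentRep hv hx) hn

theorem isCFJoined_hubColoring_of_not_isIsolated (hv : G.IsUniversal v)
    (hx : ¬ (G.deleteIncidenceSet v).IsIsolated x) (hy : y ≠ v)
    (hxy : ¬ (G.deleteIncidenceSet v).Reachable x y) : IsCFJoined G (hubColoring G v c) x y := by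
  have hspoke := hasBlockPath_of_reachable hv
    (fun _ ↦ hubColoring_of_mem_edgeSet (c := c) hv) hy .rfl
  split_ifs at hspoke
  · exact (hasBlockPath_hubColoring hv hx zero_lt_two).isCFJoined hspoke rfl hxy
  · exact (hasBlockPath_hubColoring hv hx one_lt_two).isCFJoined hspoke rfl hxy

theorem isCFJoined_of_notMem_support (hv : G.IsUniversal v)
    (hc : ∀ e ∈ (G.deleteIncidenceSet v).edgeSet, c e = 0)
    {p : (G.deleteIncidenceSet v).Walk w x} (hp : p.IsPath) (hw : w ≠ v) (hcw : c s(v, w) = 1)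
    (hy : y ∉ p.support) (hyv : y ≠ v) (hcy : c s(v, y) = 0) : IsCFJoined G c y x := by
  have hzero := eq_zero_of_mem_edges_mapLe hc p
  have hvp := notMem_support_deleteIncidenceSet hw p
  let q := p.mapLe (G.deleteIncidenceSet_le v)
  have hq : (Walk.cons (hv hyv.symm).symm (.cons (hv hw.symm) q)).IsPath := by
    rw [Walk.cons_isPath_iff, Walk.cons_isPath_iff, Walk.support_cons,
      Walk.support_mapLe_eq_support]
    exact ⟨⟨hp.mapLe _, hvp⟩, by simp [hyv, hy]⟩
  refine IsCFJoined.of_isPath (e := s(v, w)) hq (by simp) fun e he hcol ↦ ?_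
  rw [Walk.edges_cons, Walk.edges_cons, List.mem_cons, List.mem_cons] at he
  obtain rfl | rfl | he := he
  · rw [Sym2.eq_swap, hcy, hcw] at hcol
    exact absurd hcol zero_ne_one
  · rfl
  · rw [hzero e he, hcw] at hcol
    exact absurd hcol zero_ne_one

theorem isCFJoined_hubColoring_of_reachable (hv : G.IsUniversal v) (hxy : x ≠ y)
    (h : (G.deleteIncidenceSet v).Reachable x y) : IsCFJoined G (hubColoring G v c) x y := by
  have key : ∀ {x y}, (G.deleteIncidenceSet v).Reachable x y → x ≠ y →
      (∃ p : (G.deleteIncidenceSet v).Walk x (componentRep (G.deleteIncidenceSet v) x),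
        p.IsPath ∧ y ∉ p.support) → IsCFJoined G (hubColoring G v c) y x := by
    rintro x y h hxy ⟨p, hp, hy⟩
    have hy' := G.deleteIncidenceSet v |>.mem_support_iff_not_isIsolated.mp
      (mem_support_of_reachable hxy.symm h.symm)
    have hx' := not_isIsolated_of_reachable h.symm hy'
    have hrep := not_isIsolated_of_reachable p.reachable hx'
    refine isCFJoined_of_notMem_support hv (fun _ ↦ hubColoring_of_mem_edgeSet hv) hp.reverse
      (ne_of_not_isIsolated hrep) (hubColoring_componentRep hv hx') (by simpa using hy)
      (ne_of_not_isIsolated hy') (hubColoring_of_ne_componentRep hv hy' ?_)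
    rw [← componentRep_eq h]
    exact (ne_of_mem_of_not_mem p.end_mem_support hy).symm
  obtain hp | hp := exists_isPath_notMem_support hxy (reachable_componentRep _ x)
  · exact (key h hxy hp).symm
  · rw [componentRep_eq h] at hp
    exact key h.symm hxy.symm hp

theorem isCFConnColoring_hubColoring (hv : G.IsUniversal v)
    (hc : Set.InjOn c (bridgeGraph G).edgeSet) : IsCFConnColoring G (hubColoring G v c) := by
  intro x y hxy
  change IsCFJoined G _ x y
  obtain rfl | hx := eq_or_ne x v
  · exact .of_adj (hv hxy)
  obtain rfl | hy := eq_or_ne y v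
  · exact .of_adj (hv hxy.symm).symm
  by_cases hreach : (G.deleteIncidenceSet v).Reachable x y
  · exact isCFJoined_hubColoring_of_reachable hv hxy hreach
  by_cases hxiso : (G.deleteIncidenceSet v).IsIsolated x
  · by_cases hyiso : (G.deleteIncidenceSet v).IsIsolated y
    · have hbx : G.IsBridge s(x, v) := Sym2.eq_swap ▸ (isBridge_iff_isIsolated hv hx).mpr hxiso
      have hby := (isBridge_iff_isIsolated hv hy).mpr hyiso
      refine IsCFJoined.of_adj_of_adj (hv hx.symm).symm (hv hy.symm) hxy fun h ↦ hxy ?_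
      rw [hubColoring_of_isBridge hbx, hubColoring_of_isBridge hby] at h
      have := hc (edgeSet_bridgeGraph.superset hbx) (edgeSet_bridgeGraph.superset hby) h
      rwa [Sym2.eq_swap, Sym2.congr_right] at this
    · exact (isCFJoined_hubColoring_of_not_isIsolated hv hyiso hx (hreach ∘ .symm)).symm
  · exact isCFJoined_hubColoring_of_not_isIsolated hv hxiso hy hreach

theorem isCFConnColorable_of_isUniversal (hv : G.IsUniversal v)
    (hfin : (bridgeGraph G).edgeSet.Finite) :
    IsCFConnColorable G (max 2 (bridgeGraph G).edgeSet.ncard) := by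
  obtain ⟨c, hlt, hinj⟩ := exists_injOn_lt_ncard hfin
  refine ⟨hubColoring G v c, fun e _ ↦ ?_, isCFConnColoring_hubColoring hv hinj⟩
  by_cases he : G.IsBridge e
  · rw [hubColoring_of_isBridge he]
    exact lt_max_of_lt_right (hlt e (edgeSet_bridgeGraph.superset he))
  · refine lt_max_of_lt_left ?_
    rw [hubColoring, if_neg he]
    split_ifs <;> decide

end UniversalVertex

section Diameter

theorem adj_of_not_reachable_deleteIncidenceSet (hdiam : G.ediam ≤ 2) (hx : x ≠ v) (hy : y ≠ v)
    (hxy : ¬ (G.deleteIncidenceSet v).Reachable x y) : G.Adj v y := by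
  have hadj : ∀ {a b}, G.Adj a b → a ≠ v → b ≠ v → (G.deleteIncidenceSet v).Reachable a b :=
    fun h ha hb ↦ (deleteIncidenceSet_adj.mpr ⟨h, ha, hb⟩).reachable
  have hcommon : (G.commonNeighbors x y).Nonempty := by
    by_contra! h
    exact (edist_le_ediam.trans hdiam).not_gt (two_lt_edist_iff.mpr
      ⟨by rintro rfl; exact hxy .rfl, fun h ↦ hxy (hadj h hx hy), h⟩)
  obtain ⟨m, hxm, hym⟩ := hcommon
  obtain rfl : m = v := by
    by_contra hm
    exact hxy ((hadj hxm hx hm).trans (hadj hym hy hm).symm)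
  exact hym.symm

theorem IsCutVertex.isUniversal (hv : IsCutVertex G v) (hdiam : G.ediam ≤ 2) :
    G.IsUniversal v := by
  obtain ⟨x, y, hx, hy, hxy⟩ := hv
  intro w hw
  by_cases hxw : (G.deleteIncidenceSet v).Reachable x w
  · exact adj_of_not_reachable_deleteIncidenceSet hdiam hy hw.symm fun h ↦ hxy (hxw.trans h.symm)
  · exact adj_of_not_reachable_deleteIncidenceSet hdiam hx hw.symm hxw

theorem ne_top_of_one_lt_diam (h : 1 < G.diam) : G ≠ ⊤ := by
  rintro rfl
  have : Nontrivial V := nontrivial_of_diam_ne_zero (by lia : (⊤ : SimpleGraph V).diam ≠ 0)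
  exact h.ne' diam_top

end Diameter

end

theorem cfConn_of_diam_two_general {V : Type*} {G : SimpleGraph V} (hconn : G.Connected)
    (hne : G ≠ ⊤) (hcut : ∀ v, IsCutVertex G v → G.IsUniversal v)
    (hfin : (bridgeGraph G).edgeSet.Finite) : cfConn G = max 2 (hG G) := by
  have hcol : IsCFConnColorable G (max 2 (hG G)) := by
    by_cases! h : ∃ v, IsCutVertex G v
    · obtain ⟨v, hv⟩ := h
      refine (isCFConnColorable_of_isUniversal (hcut v hv) hfin).mono (max_le_max_left 2 ?_)
      rw [ncard_edgeSet_bridgeGraph_eq (hcut v hv)]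
      exact ncard_neighborSet_bridgeGraph_le_hG hconn.preconnected hfin v
    · obtain ⟨u, v, huv, -⟩ := ne_top_iff_exists_not_adj.mp hne
      have := nontrivial_of_ne u v huv
      obtain ⟨w, huw⟩ := hconn.preconnected.exists_adj_of_nontrivial u
      exact (isCFConnColorable_two_of_forall_not_isCutVertex h huw).mono (le_max_left _ _)
  have hmin := hcol.isCFConnColorable_cfConn
  exact hcol.cfConn_le.antisymm (max_le (hmin.two_le hne) (hG_le hmin hconn.preconnected))

/-- For a connected graph `G` of diameter `2`, `cfc(G) = max {2, h(G)}`. -/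
theorem cfConn_of_diam_two {V : Type*} [Fintype V] (G : SimpleGraph V)
    (hconn : G.Connected) (hdiam : G.diam = 2) :
    cfConn G = max 2 (hG G) :=
  cfConn_of_diam_two_general hconn (ne_top_of_one_lt_diam (by lia))
    (fun _ hz ↦ hz.isUniversal ((ENat.toNat_eq_iff two_ne_zero).mp hdiam).le) (Set.toFinite _)
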